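/- Let ρ = |ψ⟩⟨ψ| be an n-qubit pure state and S ⊆ Fin n nonempty with |S| = s. Fix K ≥ 2 and L ≥ 1. Consider the following random experiment: U₁, …, U_L are i.i.d., each U_l = ⊗_{i∈S} U_{l,i} with (U_{l,i}) independent Haar-random elements of U(2); conditionally on U_l, the outcomes Z_{l,1}, …, Z_{l,K} are i.i.d. with values in {0,1}^S and law P_{U_l}(z) = tr(U_l ρ U_l† |z⟩⟨z|). Define Ŝ_l^(K) = (1/(K(K−1))) Σ_{k ≠ k'} 1{Z_{l,k} = Z_{l,k'}} and Ĉ = 1 − (3/2)^s · (1/L) Σ_{l=1}^L Ŝ_l^(K). Then: (i) E[Ĉ] = C_ψ(S) (the estimator is unbiased); and (ii) for any ε > 0 and δ ∈ (0,1), if L ≥ ⌈(9/4)^s · log(2/δ) / (2ε²)⌉ then P(|Ĉ − C_ψ(S)| ≥ ε) ≤ δ. -/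

import Mathlib

open Matrix MeasureTheory
open scoped BigOperators ComplexConjugate Kronecker

/-- `n`-qubit operators: matrices indexed by functions `Fin n → Fin 2`. -/
abbrev QMat (n : ℕ) : Type := Matrix (Fin n → Fin 2) (Fin n → Fin 2) ℂ

/-- Combine an assignment on `α` and one on its complement into a full index. -/
noncomputable def embedIdx {n : ℕ} (α : Finset (Fin n)) (i : {x : Fin n // x ∈ α} → Fin 2)
    (k : {x : Fin n // x ∉ α} → Fin 2) : Fin n → Fin 2 :=
  fun x => if h : x ∈ α then i ⟨x, h⟩ else k ⟨x, h⟩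

/-- The reduced density matrix on the qubits in `α` (partial trace over the rest). -/
noncomputable def reduced {n : ℕ} (ρ : QMat n) (α : Finset (Fin n)) :
    Matrix ({x : Fin n // x ∈ α} → Fin 2) ({x : Fin n // x ∈ α} → Fin 2) ℂ :=
  fun i j => ∑ k : ({x : Fin n // x ∉ α} → Fin 2), ρ (embedIdx α i k) (embedIdx α j k)

/-- The concentratable entanglement `C_ψ(S) = 1 - 2^{-|S|} ∑_{α ⊆ S} tr(ρ_α²)`. -/
noncomputable def CE {n : ℕ} (ρ : QMat n) (S : Finset (Fin n)) : ℝ :=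
  1 - (1 / 2 : ℝ) ^ S.card *
    ∑ α ∈ S.powerset, (Matrix.trace (reduced ρ α * reduced ρ α)).re

/-- Tensor product of single-qubit operators on the qubits in `S`, identity elsewhere. -/
noncomputable def localOp {n : ℕ} (S : Finset (Fin n))
    (V : {i : Fin n // i ∈ S} → Matrix (Fin 2) (Fin 2) ℂ) : QMat n :=
  fun x y => ∏ i : Fin n,
    if h : i ∈ S then V ⟨i, h⟩ (x i) (y i)
    else (if x i = y i then 1 else 0)

/-- Projector onto computational basis state `z` on the qubits in `S`, identity elsewhere. -/
noncomputable def projZ {n : ℕ} (S : Finset (Fin n)) (z : {i : Fin n // i ∈ S} → Fin 2) : QMat n :=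
  fun x y => ∏ i : Fin n,
    if h : i ∈ S then (if x i = z ⟨i, h⟩ ∧ y i = z ⟨i, h⟩ then 1 else 0)
    else (if x i = y i then 1 else 0)

noncomputable instance : MeasurableSpace (Matrix.unitaryGroup (Fin 2) ℂ) := borel _
instance : BorelSpace (Matrix.unitaryGroup (Fin 2) ℂ) := ⟨rfl⟩

/-- The Born probability `P_U(z) = tr(U ρ U† |z⟩⟨z|)` of outcome `z` after the local
randomized measurement given by the single-qubit unitaries `V i`, `i ∈ S`. -/
noncomputable def born {n : ℕ} (ρ : QMat n) (S : Finset (Fin n))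
    (V : {i : Fin n // i ∈ S} → Matrix.unitaryGroup (Fin 2) ℂ)
    (z : {i : Fin n // i ∈ S} → Fin 2) : ℝ :=
  (Matrix.trace (localOp S (fun i => (V i : Matrix (Fin 2) (Fin 2) ℂ)) * ρ *
      (localOp S (fun i => (V i : Matrix (Fin 2) (Fin 2) ℂ)))ᴴ * projZ S z)).re

/-- The Born distribution on outcome strings, as a measure. -/
noncomputable def bornMeasure {n : ℕ} (ρ : QMat n) (S : Finset (Fin n))
    (V : {i : Fin n // i ∈ S} → Matrix.unitaryGroup (Fin 2) ℂ) :
    Measure ({i : Fin n // i ∈ S} → Fin 2) :=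
  ∑ z : ({i : Fin n // i ∈ S} → Fin 2), ENNReal.ofReal (born ρ S V z) • Measure.dirac z

/-- Joint law of one round of the LRM experiment: a tuple of Haar-random single-qubit
unitaries together with `K` conditionally i.i.d. Born-distributed outcomes. -/
noncomputable def jointRound {n : ℕ} (μ : Measure (Matrix.unitaryGroup (Fin 2) ℂ))
    (ρ : QMat n) (S : Finset (Fin n)) (K : ℕ) :
    Measure (({i : Fin n // i ∈ S} → Matrix.unitaryGroup (Fin 2) ℂ) ×
      (Fin K → ({i : Fin n // i ∈ S} → Fin 2))) :=
  (Measure.pi fun _ : {i : Fin n // i ∈ S} => μ).bind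
    (fun V => (Measure.pi fun _ : Fin K => bornMeasure ρ S V).map (Prod.mk V))

/-- `Ŝ^(K) = (1/(K(K-1))) ∑_{k ≠ k'} 1{z_k = z_{k'}}`. -/
noncomputable def ShatK {n : ℕ} {S : Finset (Fin n)} (K : ℕ)
    (zs : Fin K → ({i : Fin n // i ∈ S} → Fin 2)) : ℝ :=
  (1 / ((K : ℝ) * ((K : ℝ) - 1))) * ∑ k : Fin K, ∑ k' : Fin K,
    if k ≠ k' ∧ zs k = zs k' then 1 else 0



/-- Tensor product of single-qubit operators on all `n` qubits. -/
noncomputable def tensorOp {n : ℕ} (A : Fin n → Matrix (Fin 2) (Fin 2) ℂ) : QMat n :=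
  fun x y => ∏ i, A i (x i) (y i)

/-- Extend a family of single-qubit operators on `S` by the identity outside `S`. -/
noncomputable def extendOne {n : ℕ} (S : Finset (Fin n))
    (V : {i : Fin n // i ∈ S} → Matrix (Fin 2) (Fin 2) ℂ) (i : Fin n) :
    Matrix (Fin 2) (Fin 2) ℂ :=
  if h : i ∈ S then V ⟨i, h⟩ else 1

section LinearAlgebra

variable {n : ℕ}

lemma tensorOp_mul (A B : Fin n → Matrix (Fin 2) (Fin 2) ℂ) :
    tensorOp A * tensorOp B = tensorOp fun i => A i * B i := by
  ext x y
  simp only [tensorOp, Matrix.mul_apply, Finset.prod_univ_sum, Fintype.piFinset_univ,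
    Finset.prod_mul_distrib]

lemma tensorOp_conjTranspose (A : Fin n → Matrix (Fin 2) (Fin 2) ℂ) :
    (tensorOp A)ᴴ = tensorOp fun i => (A i)ᴴ := by
  ext x y
  simp [tensorOp, Matrix.conjTranspose_apply]

lemma tensorOp_one : tensorOp (fun _ : Fin n => (1 : Matrix (Fin 2) (Fin 2) ℂ)) = 1 := by
  ext x y
  simp [tensorOp, Matrix.one_apply, Finset.prod_ite_zero, funext_iff]

lemma localOp_eq_tensorOp (S : Finset (Fin n))
    (V : {i : Fin n // i ∈ S} → Matrix (Fin 2) (Fin 2) ℂ) :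
    localOp S V = tensorOp (extendOne S V) := by
  ext x y
  refine Finset.prod_congr rfl fun i _ => ?_
  by_cases h : i ∈ S <;> simp [extendOne, h, Matrix.one_apply]

lemma projZ_eq_tensorOp (S : Finset (Fin n)) (z : {i : Fin n // i ∈ S} → Fin 2) :
    projZ S z = tensorOp (extendOne S fun i => Matrix.single (z i) (z i) 1) := by
  ext x y
  refine Finset.prod_congr rfl fun i _ => ?_
  by_cases h : i ∈ S <;> simp [extendOne, h, Matrix.one_apply, Matrix.single_apply, eq_comm]

lemma extendOne_mul (S : Finset (Fin n))
    (V W : {i : Fin n // i ∈ S} → Matrix (Fin 2) (Fin 2) ℂ) (i : Fin n) :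
    extendOne S V i * extendOne S W i = extendOne S (fun j => V j * W j) i := by
  by_cases h : i ∈ S <;> simp [extendOne, h]

lemma extendOne_conjTranspose (S : Finset (Fin n))
    (V : {i : Fin n // i ∈ S} → Matrix (Fin 2) (Fin 2) ℂ) (i : Fin n) :
    (extendOne S V i)ᴴ = extendOne S (fun j => (V j)ᴴ) i := by
  by_cases h : i ∈ S <;> simp [extendOne, h]

lemma localOp_conjTranspose (S : Finset (Fin n))
    (V : {i : Fin n // i ∈ S} → Matrix (Fin 2) (Fin 2) ℂ) :
    (localOp S V)ᴴ = localOp S fun i => (V i)ᴴ := by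
  simp only [localOp_eq_tensorOp, tensorOp_conjTranspose, extendOne_conjTranspose]

lemma localOp_mul (S : Finset (Fin n))
    (V W : {i : Fin n // i ∈ S} → Matrix (Fin 2) (Fin 2) ℂ) :
    localOp S V * localOp S W = localOp S fun i => V i * W i := by
  simp only [localOp_eq_tensorOp, tensorOp_mul, extendOne_mul]

lemma projZ_eq_localOp (S : Finset (Fin n)) (z : {i : Fin n // i ∈ S} → Fin 2) :
    projZ S z = localOp S fun i => Matrix.single (z i) (z i) 1 := by
  rw [projZ_eq_tensorOp, localOp_eq_tensorOp]

lemma localOp_one (S : Finset (Fin n)) : localOp S (fun _ => 1) = 1 := by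
  rw [localOp_eq_tensorOp, ← tensorOp_one]
  congr 1
  ext1 i
  simp [extendOne]

lemma sum_projZ (S : Finset (Fin n)) : ∑ z, projZ S z = 1 := by
  ext x y
  have key : ∀ z : {i : Fin n // i ∈ S} → Fin 2,
      projZ S z x y = if z = (fun i : {i // i ∈ S} => x i) then (if x = y then 1 else 0) else 0 := by
    intro z
    by_cases hz : z = fun i : {i // i ∈ S} => x i
    · subst hz
      rw [if_pos rfl]
      have : projZ S (fun i : {i // i ∈ S} => x i) x y = ∏ i, if x i = y i then (1 : ℂ) else 0 := by
        refine Finset.prod_congr rfl fun i _ => ?_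
        by_cases h : i ∈ S <;> simp [h, eq_comm]
      rw [this]
      simp [Finset.prod_ite_zero, funext_iff]
    · rw [if_neg hz]
      obtain ⟨i, hi⟩ := Function.ne_iff.1 hz
      refine Finset.prod_eq_zero (Finset.mem_univ (i : Fin n)) ?_
      simp only [i.2, dif_pos, Subtype.coe_eta]
      exact if_neg fun h => hi h.1.symm
  simp [Matrix.sum_apply, key, Matrix.one_apply]

/-- The single-qubit effect `U† |z⟩⟨z| U` of a basis measurement after `U`. -/
lemma conjTranspose_mul_single_mul (U : Matrix (Fin 2) (Fin 2) ℂ) (z a b : Fin 2) :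
    (Uᴴ * Matrix.single z z 1 * U : Matrix (Fin 2) (Fin 2) ℂ) a b = star (U z a) * U z b := by
  fin_cases z <;> simp [Matrix.mul_apply, Matrix.single_apply, Fin.sum_univ_two]

/-- Born probability in the Heisenberg picture, as a complex number. -/
noncomputable def bornC (ρ : QMat n) (S : Finset (Fin n))
    (V : {i : Fin n // i ∈ S} → Matrix.unitaryGroup (Fin 2) ℂ)
    (z : {i : Fin n // i ∈ S} → Fin 2) : ℂ :=
  Matrix.trace (localOp S (fun i => (V i : Matrix (Fin 2) (Fin 2) ℂ)) * ρ *
      (localOp S (fun i => (V i : Matrix (Fin 2) (Fin 2) ℂ)))ᴴ * projZ S z)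

lemma bornC_eq_sum (ρ : QMat n) (S : Finset (Fin n))
    (V : {i : Fin n // i ∈ S} → Matrix.unitaryGroup (Fin 2) ℂ)
    (z : {i : Fin n // i ∈ S} → Fin 2) :
    bornC ρ S V z = ∑ x, ∑ y, ρ x y *
      ((∏ i : {i // i ∈ S}, (star (V i (z i) (y i)) * V i (z i) (x i))) *
        ∏ i : {i // i ∉ S}, if y i = x i then 1 else 0) := by
  rw [bornC, Matrix.mul_assoc, Matrix.mul_assoc, Matrix.trace_mul_comm, Matrix.mul_assoc,
    localOp_conjTranspose, projZ_eq_localOp, localOp_mul, localOp_mul, Matrix.trace]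
  refine Finset.sum_congr rfl fun x _ => ?_
  rw [Matrix.diag_apply, Matrix.mul_apply]
  refine Finset.sum_congr rfl fun y _ => ?_
  rw [localOp, ← Fintype.prod_subtype_mul_prod_subtype (fun i => i ∈ S)]
  congr 2
  · refine Finset.prod_congr (Finset.ext fun i => by simp) fun i _ => ?_
    rw [dif_pos i.2]
    exact conjTranspose_mul_single_mul _ _ _ _
  · refine Finset.prod_congr rfl fun i _ => ?_
    rw [dif_neg i.2]

lemma localOp_unitary (S : Finset (Fin n))
    (V : {i : Fin n // i ∈ S} → Matrix.unitaryGroup (Fin 2) ℂ) :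
    (localOp S (fun i => (V i : Matrix (Fin 2) (Fin 2) ℂ)))ᴴ *
      localOp S (fun i => (V i : Matrix (Fin 2) (Fin 2) ℂ)) = 1 := by
  rw [localOp_conjTranspose, localOp_mul, ← localOp_one S]
  congr 1
  ext1 i
  exact Matrix.UnitaryGroup.star_mul_self (V i)

lemma sum_bornC (ρ : QMat n) (S : Finset (Fin n))
    (V : {i : Fin n // i ∈ S} → Matrix.unitaryGroup (Fin 2) ℂ) :
    ∑ z, bornC ρ S V z = ρ.trace := by
  simp only [bornC]
  rw [← Matrix.trace_sum, ← Finset.mul_sum, sum_projZ, Matrix.mul_one, Matrix.mul_assoc,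
    Matrix.trace_mul_comm, Matrix.mul_assoc, localOp_unitary, Matrix.mul_one]

open scoped ComplexOrder in
lemma bornC_nonneg {ρ : QMat n} (hρ : ρ.PosSemidef) (S : Finset (Fin n))
    (V : {i : Fin n // i ∈ S} → Matrix.unitaryGroup (Fin 2) ℂ)
    (z : {i : Fin n // i ∈ S} → Fin 2) : 0 ≤ bornC ρ S V z := by
  have hP : projZ S z = (projZ S z)ᴴ * projZ S z := by
    rw [projZ_eq_localOp, localOp_conjTranspose, localOp_mul]
    simp
  rw [bornC, hP, ← Matrix.mul_assoc, Matrix.trace_mul_comm]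
  have := (hρ.mul_mul_conjTranspose_same (localOp S fun i => (V i : Matrix _ _ ℂ)))
    |>.mul_mul_conjTranspose_same (projZ S z) |>.trace_nonneg
  simpa only [Matrix.mul_assoc] using this

lemma born_eq_re (ρ : QMat n) (S : Finset (Fin n))
    (V : {i : Fin n // i ∈ S} → Matrix.unitaryGroup (Fin 2) ℂ)
    (z : {i : Fin n // i ∈ S} → Fin 2) : born ρ S V z = (bornC ρ S V z).re := rfl

open scoped ComplexOrder in
lemma born_nonneg {ρ : QMat n} (hρ : ρ.PosSemidef) (S : Finset (Fin n))
    (V : {i : Fin n // i ∈ S} → Matrix.unitaryGroup (Fin 2) ℂ)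
    (z : {i : Fin n // i ∈ S} → Fin 2) : 0 ≤ born ρ S V z :=
  (Complex.nonneg_iff.1 (bornC_nonneg hρ S V z)).1

open scoped ComplexOrder in
lemma ofReal_born {ρ : QMat n} (hρ : ρ.PosSemidef) (S : Finset (Fin n))
    (V : {i : Fin n // i ∈ S} → Matrix.unitaryGroup (Fin 2) ℂ)
    (z : {i : Fin n // i ∈ S} → Fin 2) : (born ρ S V z : ℂ) = bornC ρ S V z :=
  (Complex.eq_re_of_ofReal_le (r := 0) (bornC_nonneg hρ S V z)).symm

lemma sum_born {ρ : QMat n} (hρ : ρ.trace = 1) (S : Finset (Fin n))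
    (V : {i : Fin n // i ∈ S} → Matrix.unitaryGroup (Fin 2) ℂ) :
    ∑ z, born ρ S V z = 1 := by
  simp only [born_eq_re]
  rw [← Complex.re_sum, sum_bornC, hρ, Complex.one_re]

/-- The purity of a reduced state as a contraction of two copies of the global state. -/
lemma trace_reduced_mul_reduced (ρ : QMat n) (α : Finset (Fin n)) :
    Matrix.trace (reduced ρ α * reduced ρ α) = ∑ x, ∑ y, ∑ x', ∑ y', ρ x y * ρ x' y' *
      ∏ i, if i ∈ α then (if y i = x' i ∧ y' i = x i then 1 else 0)
        else (if y i = x i ∧ y' i = x' i then 1 else 0) := by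
  have hsum : ∀ f : (Fin n → Fin 2) → ℂ, ∑ x, f x = ∑ i, ∑ k, f (embedIdx α i k) := by
    intro f
    rw [← Fintype.sum_prod_type']
    exact ((Equiv.piEquivPiSubtypeProd (fun i => i ∈ α) fun _ => Fin 2).symm.sum_comp f).symm
  have hmem : ∀ i k (j : {x // x ∈ α}), embedIdx α i k j = i j := by
    intro i k j; simp [embedIdx]
  have hnot : ∀ i k (j : {x // x ∉ α}), embedIdx α i k j = k j := by
    intro i k j; simp [embedIdx, j.2]
  have hprod : ∀ i₁ k₁ i₂ k₂ i₃ k₃ i₄ k₄,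
      (∏ i, if i ∈ α then
          (if embedIdx α i₂ k₂ i = embedIdx α i₃ k₃ i ∧ embedIdx α i₄ k₄ i = embedIdx α i₁ k₁ i
            then (1 : ℂ) else 0)
        else (if embedIdx α i₂ k₂ i = embedIdx α i₁ k₁ i ∧
          embedIdx α i₄ k₄ i = embedIdx α i₃ k₃ i then 1 else 0)) =
      if k₄ = k₃ then if i₄ = i₁ then if i₃ = i₂ then if k₂ = k₁ then 1 else 0 else 0 else 0
        else 0 := by
    intro i₁ k₁ i₂ k₂ i₃ k₃ i₄ k₄
    rw [← Fintype.prod_subtype_mul_prod_subtype (fun i => i ∈ α)]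
    have h1 : ∀ i : {x // x ∈ α}, (i : Fin n) ∈ α := fun i => i.2
    have h2 : ∀ i : {x // x ∉ α}, (i : Fin n) ∉ α := fun i => i.2
    simp only [h1, h2, if_true, if_false, hmem, hnot, Finset.prod_ite_zero, Finset.mem_univ,
      forall_const, Finset.prod_const_one, ← funext_iff, ite_and, eq_comm (a := i₂)]
    split_ifs <;> simp_all
  simp only [hsum, hprod, mul_ite, mul_one, mul_zero]
  simp only [Matrix.trace, Matrix.diag_apply, Matrix.mul_apply, reduced, Finset.sum_mul_sum]
  refine Finset.sum_congr rfl fun i₁ _ => ?_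
  simp only [Finset.sum_ite_eq', Finset.mem_univ, if_true, Finset.sum_ite_irrel,
    Finset.sum_const_zero]
  exact Finset.sum_comm

end LinearAlgebra


section HaarMoments

instance : CompactSpace (Matrix.unitaryGroup (Fin 2) ℂ) := by
  have hsub : (Matrix.unitaryGroup (Fin 2) ℂ : Set (Matrix (Fin 2) (Fin 2) ℂ)) ⊆
      Set.univ.pi fun _ => Set.univ.pi fun _ => Metric.closedBall (0 : ℂ) 1 := by
    intro U hU i _ j _
    simpa using entry_norm_bound_of_unitary hU i j
  have hcl : IsClosed (Matrix.unitaryGroup (Fin 2) ℂ : Set (Matrix (Fin 2) (Fin 2) ℂ)) :=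
    isClosed_unitary
  have hc : IsCompact (Set.univ.pi fun _ => Set.univ.pi fun _ => Metric.closedBall (0 : ℂ) 1 :
      Set (Matrix (Fin 2) (Fin 2) ℂ)) :=
    isCompact_univ_pi fun _ => isCompact_univ_pi fun _ => isCompact_closedBall 0 1
  exact isCompact_iff_compactSpace.1 (hc.of_isClosed_subset hcl hsub)

lemma continuous_unitary_entry (z a : Fin 2) :
    Continuous fun U : Matrix.unitaryGroup (Fin 2) ℂ => U z a :=
  continuous_subtype_val.matrix_elem z a

/-- The fourth-order monomial in row `z` of a unitary. -/
noncomputable def rowMonomial (z a b c d : Fin 2) (U : Matrix.unitaryGroup (Fin 2) ℂ) : ℂ :=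
  star (U z b) * U z a * (star (U z d) * U z c)

lemma continuous_rowMonomial (z a b c d : Fin 2) : Continuous (rowMonomial z a b c d) :=
  ((continuous_unitary_entry z b).star.mul (continuous_unitary_entry z a)).mul
    ((continuous_unitary_entry z d).star.mul (continuous_unitary_entry z c))

variable (μ : Measure (Matrix.unitaryGroup (Fin 2) ℂ)) [μ.IsHaarMeasure] [IsProbabilityMeasure μ]

omit [IsProbabilityMeasure μ] in
lemma integrable_rowMonomial (z a b c d : Fin 2) : Integrable (rowMonomial z a b c d) μ :=
  (continuous_rowMonomial z a b c d).integrable_of_hasCompactSupport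
    (HasCompactSupport.of_compactSpace _)

lemma map_mul_right_eq_self_of_isProbabilityMeasure (W : Matrix.unitaryGroup (Fin 2) ℂ) :
    μ.map (· * W) = μ := by
  have : IsProbabilityMeasure (μ.map (· * W)) :=
    Measure.isProbabilityMeasure_map (by fun_prop)
  exact Measure.isHaarMeasure_eq_of_isProbabilityMeasure _ _

lemma integral_rowMonomial_eq_sum (W : Matrix.unitaryGroup (Fin 2) ℂ) (z a b c d : Fin 2) :
    ∫ U, rowMonomial z a b c d U ∂μ = ∑ a', ∑ b', ∑ c', ∑ d',
      (W a' a * star (W b' b) * W c' c * star (W d' d)) * ∫ U, rowMonomial z a' b' c' d' U ∂μ := by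
  have hint := integrable_rowMonomial μ z
  conv_lhs => rw [← map_mul_right_eq_self_of_isProbabilityMeasure μ W]
  rw [integral_map (by fun_prop) (continuous_rowMonomial z a b c d).aestronglyMeasurable]
  have : ∀ U : Matrix.unitaryGroup (Fin 2) ℂ, rowMonomial z a b c d (U * W) =
      ∑ a', ∑ b', ∑ c', ∑ d',
        (W a' a * star (W b' b) * W c' c * star (W d' d)) * rowMonomial z a' b' c' d' U := by
    intro U
    simp only [rowMonomial, Matrix.UnitaryGroup.mul_val, Matrix.mul_apply, Fin.sum_univ_two,
      star_add, star_mul']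
    ring
  simp only [this]
  have h4 : ∀ a' b' c' d' : Fin 2, Integrable (fun U =>
      (W a' a * star (W b' b) * W c' c * star (W d' d)) * rowMonomial z a' b' c' d' U) μ :=
    fun a' b' c' d' => (hint a' b' c' d').const_mul _
  have h3 := fun a' b' c' : Fin 2 =>
    integrable_finsetSum Finset.univ fun d' _ => h4 a' b' c' d'
  have h2 := fun a' b' : Fin 2 =>
    integrable_finsetSum Finset.univ fun c' _ => h3 a' b' c'
  have h1 := fun a' : Fin 2 =>
    integrable_finsetSum Finset.univ fun b' _ => h2 a' b'
  rw [integral_finsetSum _ fun a' _ => h1 a']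
  refine Finset.sum_congr rfl fun a' _ => ?_
  rw [integral_finsetSum _ fun b' _ => h2 a' b']
  refine Finset.sum_congr rfl fun b' _ => ?_
  rw [integral_finsetSum _ fun c' _ => h3 a' b' c']
  refine Finset.sum_congr rfl fun c' _ => ?_
  rw [integral_finsetSum _ fun d' _ => h4 a' b' c' d']
  exact Finset.sum_congr rfl fun d' _ => integral_const_mul _ _

lemma sum_integral_rowMonomial_diag (z : Fin 2) :
    ∑ a, ∑ c, ∫ U, rowMonomial z a a c c U ∂μ = 1 := by
  have hone : ∀ U : Matrix.unitaryGroup (Fin 2) ℂ, ∑ a, ∑ c, rowMonomial z a a c c U = 1 := by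
    intro U
    have h := congrFun (congrFun (Matrix.mem_unitaryGroup_iff.1 U.2) z) z
    rw [Matrix.mul_apply, Fin.sum_univ_two, Matrix.one_apply_eq] at h
    simp only [Matrix.star_apply] at h
    simp only [rowMonomial, Fin.sum_univ_two]
    linear_combination (U z 0 * star (U z 0) + U z 1 * star (U z 1) + 1) * h
  have : ∫ U, ∑ a, ∑ c, rowMonomial z a a c c U ∂μ = 1 := by simp only [hone]; simp
  rw [← this, integral_finsetSum _ fun a _ => integrable_finsetSum _ fun c _ =>
    integrable_rowMonomial μ z a a c c]
  exact Finset.sum_congr rfl fun a _ => (integral_finsetSum _ fun c _ =>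
    integrable_rowMonomial μ z a a c c).symm

/-- Second moment of a row of a Haar-random single-qubit unitary. -/
lemma integral_rowMonomial (z a b c d : Fin 2) :
    ∫ U, rowMonomial z a b c d U ∂μ =
      ((if b = c ∧ d = a then 1 else 0) + (if b = a ∧ d = c then 1 else 0)) / 6 := by
  have hP : !![Complex.I, 0; 0, 1] ∈ Matrix.unitaryGroup (Fin 2) ℂ := by
    rw [Matrix.mem_unitaryGroup_iff]
    ext i j
    fin_cases i <;> fin_cases j <;> simp [Matrix.mul_apply, Fin.sum_univ_two, Matrix.star_apply]
  have hR : !![(3 / 5 : ℂ), 4 / 5; -4 / 5, 3 / 5] ∈ Matrix.unitaryGroup (Fin 2) ℂ := by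
    rw [Matrix.mem_unitaryGroup_iff]
    ext i j
    fin_cases i <;> fin_cases j <;>
      simp [Matrix.mul_apply, Fin.sum_univ_two, Matrix.star_apply, map_ofNat] <;> norm_num
  have hX : !![(0 : ℂ), 1; 1, 0] ∈ Matrix.unitaryGroup (Fin 2) ℂ := by
    rw [Matrix.mem_unitaryGroup_iff]
    ext i j
    fin_cases i <;> fin_cases j <;> simp [Matrix.mul_apply, Fin.sum_univ_two, Matrix.star_apply]
  have symm₁ : ∀ a b c d, ∫ U, rowMonomial z a b c d U ∂μ = ∫ U, rowMonomial z c b a d U ∂μ := by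
    intro a b c d
    congr 1
    ext U
    simp only [rowMonomial]
    ring
  have symm₂ : ∀ a b c d, ∫ U, rowMonomial z a b c d U ∂μ = ∫ U, rowMonomial z a d c b U ∂μ := by
    intro a b c d
    congr 1
    ext U
    simp only [rowMonomial]
    ring
  have phase := integral_rowMonomial_eq_sum μ ⟨_, hP⟩ z
  have swap := integral_rowMonomial_eq_sum μ ⟨_, hX⟩ z 0 0 0 0
  have rot := integral_rowMonomial_eq_sum μ ⟨_, hR⟩ z 0 0 0 0
  have norm := sum_integral_rowMonomial_diag μ z
  revert phase swap rot norm symm₁ symm₂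
  generalize hM : (fun a b c d => ∫ U, rowMonomial z a b c d U ∂μ) = M
  have hM' : ∀ a b c d, ∫ U, rowMonomial z a b c d U ∂μ = M a b c d := fun a b c d => by rw [← hM]
  simp only [hM']
  intro symm₁ symm₂ phase swap rot norm
  have p0 := phase 0 0 0 1
  have p1 := phase 0 0 1 0
  have p2 := phase 0 1 0 1
  have p3 := phase 1 0 1 0
  have p4 := phase 0 1 1 1
  have p5 := phase 1 1 1 0
  simp [Fin.sum_univ_two, map_ofNat] at p0 p1 p2 p3 p4 p5 norm swap rot
  have zero_of_eq : ∀ x : ℂ, x = Complex.I * x → x = 0 := fun x h => by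
    linear_combination (1 + Complex.I) / 2 * h + x / 2 * Complex.I_mul_I
  have zero_of_eq' : ∀ x : ℂ, x = -(Complex.I * x) → x = 0 := fun x h => by
    linear_combination (1 - Complex.I) / 2 * h + x / 2 * Complex.I_mul_I
  replace p0 := zero_of_eq _ p0
  replace p1 := zero_of_eq' _ p1
  replace p2 : M 0 1 0 1 = 0 := by linear_combination p2 / 2
  replace p3 : M 1 0 1 0 = 0 := by linear_combination p3 / 2
  replace p4 := zero_of_eq _ p4
  replace p5 := zero_of_eq' _ p5
  have e₁ : M 1 0 0 0 = 0 := (symm₁ 0 0 1 0).symm.trans p1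
  have e₂ : M 0 1 0 0 = 0 := (symm₂ 0 0 0 1).symm.trans p0
  have e₃ : M 1 1 0 1 = 0 := (symm₁ 0 1 1 1).symm.trans p4
  have e₄ : M 1 0 1 1 = 0 := (symm₂ 1 0 1 1).trans p5
  have q₁ := symm₁ 0 0 1 1
  have q₂ := symm₂ 0 0 1 1
  have q₃ := symm₁ 0 1 1 0
  rw [p0, p1, p2, p3, p4, p5, e₁, e₂, e₃, e₄, ← q₁, ← q₃, ← q₂, ← swap] at rot
  rw [← q₃, ← q₂, ← swap] at norm
  have hq : M 0 0 1 1 = 1 / 6 := by linear_combination norm / 6 - 625 / 864 * rot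
  have hp : M 0 0 0 0 = 1 / 3 := by linear_combination norm / 2 - hq
  fin_cases a <;> fin_cases b <;> fin_cases c <;> fin_cases d <;>
    simp [p0, p1, p2, p3, p4, p5, e₁, e₂, e₃, e₄, ← q₁, ← q₃, ← q₂, ← swap, hq, hp] <;> norm_num

end HaarMoments


section SecondMoment

variable {n : ℕ}

lemma bornC_sq_eq_sum (ρ : QMat n) (S : Finset (Fin n))
    (V : {i : Fin n // i ∈ S} → Matrix.unitaryGroup (Fin 2) ℂ)
    (z : {i : Fin n // i ∈ S} → Fin 2) :
    bornC ρ S V z ^ 2 = ∑ x, ∑ y, ∑ x', ∑ y', (ρ x y * ρ x' y' *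
      ∏ i : {i // i ∉ S}, if y i = x i ∧ y' i = x' i then 1 else 0) *
        ∏ i : {i // i ∈ S}, rowMonomial (z i) (x i) (y i) (x' i) (y' i) (V i) := by
  rw [sq, bornC_eq_sum, Finset.sum_mul_sum]
  simp only [Finset.sum_mul_sum]
  refine Finset.sum_congr rfl fun x _ => ?_
  rw [Finset.sum_comm]
  refine Finset.sum_congr rfl fun y _ => Finset.sum_congr rfl fun x' _ =>
    Finset.sum_congr rfl fun y' _ => ?_
  have h : ∀ i : {i // i ∉ S}, (if y i = x i ∧ y' i = x' i then (1 : ℂ) else 0) =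
      (if y i = x i then 1 else 0) * (if y' i = x' i then 1 else 0) := fun i => by
    rw [ite_and, ite_mul, one_mul, zero_mul]
  simp only [rowMonomial, h, Finset.prod_mul_distrib]
  ring

variable (μ : Measure (Matrix.unitaryGroup (Fin 2) ℂ)) [μ.IsHaarMeasure] [IsProbabilityMeasure μ]

omit [IsProbabilityMeasure μ] in
lemma integrable_bornC_sq (ρ : QMat n) (S : Finset (Fin n)) (z : {i : Fin n // i ∈ S} → Fin 2) :
    Integrable (fun V => bornC ρ S V z ^ 2) (Measure.pi fun _ : {i : Fin n // i ∈ S} => μ) := by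
  simp only [bornC_sq_eq_sum]
  refine integrable_finsetSum _ fun x _ => integrable_finsetSum _ fun y _ =>
    integrable_finsetSum _ fun x' _ => integrable_finsetSum _ fun y' _ => Integrable.const_mul ?_ _
  exact Integrable.fintype_prod fun i => integrable_rowMonomial μ _ _ _ _ _

lemma prod_add_ite_eq_sum_powerset (S : Finset (Fin n)) (f g : Fin n → ℂ) :
    (∏ i : {i // i ∉ S}, g i) * ∏ i : {i // i ∈ S}, (f i + g i) =
      ∑ α ∈ S.powerset, ∏ i, if i ∈ α then f i else g i := by
  rw [Finset.prod_coe_sort S fun i => f i + g i, Finset.prod_add, Finset.mul_sum]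
  refine Finset.sum_congr rfl fun α hα => ?_
  have hαS := Finset.mem_powerset.1 hα
  rw [Finset.prod_ite, Finset.filter_mem_eq_inter, Finset.univ_inter, mul_left_comm]
  congr 1
  have : ∏ i : {i // i ∉ S}, g i = ∏ i ∈ Sᶜ, g i :=
    (Finset.prod_subtype _ (by simp) g).symm
  rw [this, ← Finset.prod_union]
  · refine Finset.prod_congr ?_ fun _ _ => rfl
    ext i
    have := @hαS i
    simp only [Finset.mem_union, Finset.mem_compl, Finset.mem_sdiff, Finset.mem_filter,
      Finset.mem_univ, true_and]
    tauto
  · exact Finset.disjoint_left.2 fun i hi hi' =>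
      (Finset.mem_compl.1 hi) (Finset.mem_sdiff.1 hi').1

/-- Haar average of a squared Born probability. -/
lemma integral_bornC_sq (ρ : QMat n) (S : Finset (Fin n)) (z : {i : Fin n // i ∈ S} → Fin 2) :
    ∫ V, bornC ρ S V z ^ 2 ∂(Measure.pi fun _ : {i : Fin n // i ∈ S} => μ) =
      (1 / 6) ^ S.card * ∑ α ∈ S.powerset, Matrix.trace (reduced ρ α * reduced ρ α) := by
  have h4 : ∀ x y x' y' : Fin n → Fin 2,
      Integrable (fun V : {i : Fin n // i ∈ S} → Matrix.unitaryGroup (Fin 2) ℂ =>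
        (ρ x y * ρ x' y' * ∏ i : {i // i ∉ S}, if y i = x i ∧ y' i = x' i then 1 else 0) *
        ∏ i : {i // i ∈ S}, rowMonomial (z i) (x i) (y i) (x' i) (y' i) (V i))
      (Measure.pi fun _ : {i : Fin n // i ∈ S} => μ) := fun x y x' y' =>
    (Integrable.fintype_prod fun i => integrable_rowMonomial μ _ _ _ _ _).const_mul _
  have h3 := fun x y x' => integrable_finsetSum Finset.univ fun y' _ => h4 x y x' y'
  have h2 := fun x y => integrable_finsetSum Finset.univ fun x' _ => h3 x y x'
  have h1 := fun x => integrable_finsetSum Finset.univ fun y _ => h2 x y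
  simp only [bornC_sq_eq_sum, trace_reduced_mul_reduced]
  rw [integral_finsetSum _ fun x _ => h1 x, Finset.sum_comm, Finset.mul_sum]
  refine Finset.sum_congr rfl fun x _ => ?_
  rw [integral_finsetSum _ fun y _ => h2 x y, Finset.sum_comm, Finset.mul_sum]
  refine Finset.sum_congr rfl fun y _ => ?_
  rw [integral_finsetSum _ fun x' _ => h3 x y x', Finset.sum_comm, Finset.mul_sum]
  refine Finset.sum_congr rfl fun x' _ => ?_
  rw [integral_finsetSum _ fun y' _ => h4 x y x' y', Finset.sum_comm, Finset.mul_sum]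
  refine Finset.sum_congr rfl fun y' _ => ?_
  rw [integral_const_mul, integral_fintype_prod_eq_prod
    (fun (i : {i // i ∈ S}) U => rowMonomial (z i) (x i) (y i) (x' i) (y' i) U),
    ← Finset.mul_sum, ← prod_add_ite_eq_sum_powerset]
  simp only [integral_rowMonomial, div_eq_mul_inv, Finset.prod_mul_distrib, Finset.prod_const,
    Finset.card_univ, Fintype.card_coe, one_mul]
  ring

open scoped ComplexOrder in
lemma integral_sum_born_sq {ρ : QMat n} (hρ : ρ.PosSemidef) (S : Finset (Fin n)) :
    ∫ V, ∑ z, born ρ S V z ^ 2 ∂(Measure.pi fun _ : {i : Fin n // i ∈ S} => μ) =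
      (1 / 3) ^ S.card * ∑ α ∈ S.powerset, (Matrix.trace (reduced ρ α * reduced ρ α)).re := by
  have h : ∫ V, ((∑ z, born ρ S V z ^ 2 : ℝ) : ℂ)
      ∂(Measure.pi fun _ : {i : Fin n // i ∈ S} => μ) =
      (1 / 3) ^ S.card * ∑ α ∈ S.powerset, Matrix.trace (reduced ρ α * reduced ρ α) := by
    simp only [Complex.ofReal_sum, Complex.ofReal_pow, ofReal_born hρ]
    rw [integral_finsetSum _ fun z _ => integrable_bornC_sq μ ρ S z]
    simp only [integral_bornC_sq, Finset.sum_const, Finset.card_univ, Fintype.card_fun,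
      Fintype.card_fin, Fintype.card_coe, nsmul_eq_mul, Nat.cast_pow, Nat.cast_ofNat]
    rw [← mul_assoc, ← mul_pow]
    norm_num
  rw [integral_complex_ofReal] at h
  have h' := congrArg Complex.re h
  rw [Complex.ofReal_re] at h'
  rw [h', show ((1 : ℂ) / 3) ^ S.card = (((1 : ℝ) / 3) ^ S.card : ℝ) by push_cast; rfl,
    Complex.re_ofReal_mul, Complex.re_sum]

end SecondMoment


section Experiment

variable {n : ℕ}

instance (ρ : QMat n) (S : Finset (Fin n))
    (V : {i : Fin n // i ∈ S} → Matrix.unitaryGroup (Fin 2) ℂ) :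
    IsFiniteMeasure (bornMeasure ρ S V) := by
  refine ⟨?_⟩
  simp [bornMeasure]

lemma bornMeasure_singleton (ρ : QMat n) (S : Finset (Fin n))
    (V : {i : Fin n // i ∈ S} → Matrix.unitaryGroup (Fin 2) ℂ)
    (z : {i : Fin n // i ∈ S} → Fin 2) :
    bornMeasure ρ S V {z} = ENNReal.ofReal (born ρ S V z) := by
  simp [bornMeasure, Set.indicator_apply]

open scoped ComplexOrder in
lemma isProbabilityMeasure_bornMeasure {ρ : QMat n} (hρ : ρ.PosSemidef) (hρ' : ρ.trace = 1)
    (S : Finset (Fin n)) (V : {i : Fin n // i ∈ S} → Matrix.unitaryGroup (Fin 2) ℂ) :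
    IsProbabilityMeasure (bornMeasure ρ S V) := by
  refine ⟨?_⟩
  simp [bornMeasure, ← ENNReal.ofReal_sum_of_nonneg fun z _ => born_nonneg hρ S V z,
    sum_born hρ']

lemma measurable_born (ρ : QMat n) (S : Finset (Fin n)) (z : {i : Fin n // i ∈ S} → Fin 2) :
    Measurable fun V => born ρ S V z := by
  have hentry : ∀ (i : {i : Fin n // i ∈ S}) (a : Fin 2), Measurable
      fun V : {i : Fin n // i ∈ S} → Matrix.unitaryGroup (Fin 2) ℂ => V i (z i) a :=
    fun i a => (continuous_unitary_entry (z i) a).measurable.comp (measurable_pi_apply i)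
  simp only [born_eq_re, bornC_eq_sum]
  refine Complex.measurable_re.comp ?_
  refine Finset.measurable_fun_sum _ fun x _ => Finset.measurable_fun_sum _ fun y _ => ?_
  refine Measurable.const_mul (Measurable.mul_const ?_ _) _
  exact Finset.measurable_fun_prod _ fun i _ => (continuous_star.measurable.comp (hentry i _)).mul
    (hentry i _)

/-- The law of `K` conditionally independent outcomes, as a kernel in the unitaries. -/
noncomputable def outcomeKernel (ρ : QMat n) (S : Finset (Fin n)) (K : ℕ) :
    ProbabilityTheory.Kernel ({i : Fin n // i ∈ S} → Matrix.unitaryGroup (Fin 2) ℂ)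
      (Fin K → ({i : Fin n // i ∈ S} → Fin 2)) where
  toFun V := Measure.pi fun _ : Fin K => bornMeasure ρ S V
  measurable' := by
    refine Measure.measurable_of_measurable_coe _ fun s _ => ?_
    have h : ∀ V, (Measure.pi fun _ : Fin K => bornMeasure ρ S V) s =
        ∑ zs ∈ s.toFinite.toFinset, ∏ k, ENNReal.ofReal (born ρ S V (zs k)) := by
      intro V
      conv_lhs => rw [← s.toFinite.coe_toFinset, ← sum_measure_singleton]
      simp only [Measure.pi_singleton, bornMeasure_singleton]
    simp only [h]
    exact Finset.measurable_fun_sum _ fun zs _ => Finset.measurable_fun_prod _ fun k _ =>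
      (measurable_born ρ S (zs k)).ennreal_ofReal

open scoped ComplexOrder in
lemma isMarkovKernel_outcomeKernel {ρ : QMat n} (hρ : ρ.PosSemidef) (hρ' : ρ.trace = 1)
    (S : Finset (Fin n)) (K : ℕ) : ProbabilityTheory.IsMarkovKernel (outcomeKernel ρ S K) := by
  refine ⟨fun V => ?_⟩
  have := isProbabilityMeasure_bornMeasure hρ hρ' S V
  exact inferInstanceAs (IsProbabilityMeasure (Measure.pi fun _ : Fin K => bornMeasure ρ S V))

open scoped ComplexOrder ProbabilityTheory in
lemma jointRound_eq_compProd (μ : Measure (Matrix.unitaryGroup (Fin 2) ℂ))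
    [IsProbabilityMeasure μ] {ρ : QMat n} (hρ : ρ.PosSemidef) (hρ' : ρ.trace = 1)
    (S : Finset (Fin n)) (K : ℕ) :
    jointRound μ ρ S K =
      (Measure.pi fun _ : {i : Fin n // i ∈ S} => μ) ⊗ₘ outcomeKernel ρ S K := by
  have := isMarkovKernel_outcomeKernel hρ hρ' S K
  rw [Measure.compProd_eq_comp_prod]
  refine congrArg _ (funext fun V => ?_)
  rw [ProbabilityTheory.Kernel.prod_apply, ProbabilityTheory.Kernel.id_apply, Measure.dirac_prod]
  rfl

/-- Collision probability of two coordinates of an i.i.d. sample from a finite type. -/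
lemma integral_collision {Z : Type*} [Fintype Z] [DecidableEq Z] [MeasurableSpace Z]
    [MeasurableSingletonClass Z] (ν : Measure Z) [IsProbabilityMeasure ν] {K : ℕ} {k k' : Fin K}
    (hk : k ≠ k') :
    ∫ zs : Fin K → Z, (if zs k = zs k' then (1 : ℝ) else 0) ∂(Measure.pi fun _ => ν) =
      ∑ z, ν.real {z} ^ 2 := by
  have h : ∀ zs : Fin K → Z, (if zs k = zs k' then (1 : ℝ) else 0) =
      ∑ z, ∏ j, (if j = k then (if zs j = z then 1 else 0) else 1) *
        (if j = k' then (if zs j = z then 1 else 0) else 1) := by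
    intro zs
    simp only [Finset.prod_mul_distrib, Finset.prod_ite_eq', Finset.mem_univ, if_true]
    simp [eq_comm]
  simp only [h]
  rw [integral_finsetSum _ fun z _ => Integrable.of_finite]
  refine Finset.sum_congr rfl fun z _ => ?_
  rw [integral_fintype_prod_eq_prod (fun (j : Fin K) (w : Z) =>
    (if j = k then (if w = z then (1 : ℝ) else 0) else 1) *
        (if j = k' then (if w = z then 1 else 0) else 1))]
  have hz : ∫ w, (if w = z then (1 : ℝ) else 0) ∂ν = ν.real {z} := by
    rw [← integral_indicator_one (measurableSet_singleton z)]
    simp [Set.indicator_apply]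
  have hj : ∀ j : Fin K, ∫ w, (if j = k then (if w = z then (1 : ℝ) else 0) else 1) *
        (if j = k' then (if w = z then 1 else 0) else 1) ∂ν =
      (if j = k then ν.real {z} else 1) * (if j = k' then ν.real {z} else 1) := by
    intro j
    by_cases h₁ : j = k
    · simp [h₁, hk, hz]
    · by_cases h₂ : j = k'
      · simp [h₂, hk.symm, hz]
      · simp [h₁, h₂]
  simp only [hj, Finset.prod_mul_distrib, Finset.prod_ite_eq', Finset.mem_univ, if_true, sq]

open scoped ComplexOrder in
lemma integral_ShatK {ρ : QMat n} (hρ : ρ.PosSemidef) (hρ' : ρ.trace = 1) (S : Finset (Fin n))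
    {K : ℕ} (hK : 2 ≤ K) (V : {i : Fin n // i ∈ S} → Matrix.unitaryGroup (Fin 2) ℂ) :
    ∫ zs, ShatK K zs ∂(outcomeKernel ρ S K V) = ∑ z, born ρ S V z ^ 2 := by
  have := isProbabilityMeasure_bornMeasure hρ hρ' S V
  change ∫ zs, ShatK K zs ∂(Measure.pi fun _ : Fin K => bornMeasure ρ S V) = _
  have hreal : ∀ z, (bornMeasure ρ S V).real {z} = born ρ S V z := fun z => by
    rw [measureReal_def, bornMeasure_singleton, ENNReal.toReal_ofReal (born_nonneg hρ S V z)]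
  have hpair : ∀ k k' : Fin K, ∫ zs, (if k ≠ k' ∧ zs k = zs k' then (1 : ℝ) else 0)
      ∂(Measure.pi fun _ : Fin K => bornMeasure ρ S V) =
      if k = k' then 0 else ∑ z, born ρ S V z ^ 2 := by
    intro k k'
    by_cases hk : k = k'
    · simp [hk]
    · simp [hk, integral_collision _ hk, hreal]
  simp only [ShatK]
  rw [integral_const_mul, integral_finsetSum _ fun k _ => Integrable.of_finite]
  simp only [integral_finsetSum Finset.univ fun (k' : Fin K) _ => Integrable.of_finite, hpair]
  have hcount : ∀ c : ℝ, ∑ k : Fin K, ∑ k' : Fin K, (if k = k' then 0 else c) =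
      K * (K - 1) * c := by
    intro c
    have : ∀ k k' : Fin K, (if k = k' then 0 else c) = c - if k = k' then c else 0 := by
      intro k k'
      split_ifs <;> simp
    simp only [this, Finset.sum_sub_distrib, Finset.sum_ite_eq, Finset.mem_univ, if_true,
      Finset.sum_const, Finset.card_univ, Fintype.card_fin, nsmul_eq_mul]
    ring
  have hK' : (2 : ℝ) ≤ K := by exact_mod_cast hK
  have h₀ : (K : ℝ) * (K - 1) ≠ 0 := by
    have : (0 : ℝ) < K * (K - 1) := by nlinarith
    exact this.ne'
  rw [hcount, ← mul_assoc, one_div_mul_cancel h₀, one_mul]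

lemma ShatK_mem_Icc {S : Finset (Fin n)} {K : ℕ} (hK : 2 ≤ K)
    (zs : Fin K → ({i : Fin n // i ∈ S} → Fin 2)) : ShatK K zs ∈ Set.Icc (0 : ℝ) 1 := by
  have hK' : (2 : ℝ) ≤ K := by exact_mod_cast hK
  have h₀ : (0 : ℝ) < K * (K - 1) := by nlinarith
  have hle : ∑ k : Fin K, ∑ k' : Fin K, (if k ≠ k' ∧ zs k = zs k' then (1 : ℝ) else 0) ≤
      K * (K - 1) := by
    calc _ ≤ ∑ k : Fin K, ∑ k' : Fin K, (1 - if k = k' then (1 : ℝ) else 0) := by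
          gcongr with k _ k' _
          split_ifs <;> simp_all
      _ = K * (K - 1) := by simp [mul_sub]
  constructor
  · refine mul_nonneg (by positivity) (Finset.sum_nonneg fun k _ => Finset.sum_nonneg fun k' _ => ?_)
    split_ifs <;> simp
  · rw [ShatK, one_div_mul_eq_div, div_le_one h₀]
    exact hle

lemma measurable_ShatK_snd (S : Finset (Fin n)) (K : ℕ) :
    Measurable fun p : ({i : Fin n // i ∈ S} → Matrix.unitaryGroup (Fin 2) ℂ) ×
      (Fin K → ({i : Fin n // i ∈ S} → Fin 2)) => ShatK K p.2 :=
  (measurable_of_finite (ShatK K)).comp measurable_snd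

open scoped ComplexOrder in
lemma isProbabilityMeasure_jointRound (μ : Measure (Matrix.unitaryGroup (Fin 2) ℂ))
    [IsProbabilityMeasure μ] {ρ : QMat n} (hρ : ρ.PosSemidef) (hρ' : ρ.trace = 1)
    (S : Finset (Fin n)) (K : ℕ) : IsProbabilityMeasure (jointRound μ ρ S K) := by
  have := isMarkovKernel_outcomeKernel hρ hρ' S K
  rw [jointRound_eq_compProd μ hρ hρ']
  infer_instance

open scoped ComplexOrder in
lemma integral_ShatK_jointRound (μ : Measure (Matrix.unitaryGroup (Fin 2) ℂ))
    [μ.IsHaarMeasure] [IsProbabilityMeasure μ] {ρ : QMat n} (hρ : ρ.PosSemidef)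
    (hρ' : ρ.trace = 1) (S : Finset (Fin n)) {K : ℕ} (hK : 2 ≤ K) :
    ∫ p, ShatK K p.2 ∂(jointRound μ ρ S K) =
      (1 / 3) ^ S.card * ∑ α ∈ S.powerset, (Matrix.trace (reduced ρ α * reduced ρ α)).re := by
  have := isMarkovKernel_outcomeKernel hρ hρ' S K
  have := isProbabilityMeasure_jointRound μ hρ hρ' S K
  have hint : Integrable (fun p => ShatK K p.2) (jointRound μ ρ S K) :=
    Integrable.of_mem_Icc 0 1 (measurable_ShatK_snd S K).aemeasurable
      (ae_of_all _ fun p => ShatK_mem_Icc hK p.2)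
  rw [jointRound_eq_compProd μ hρ hρ'] at hint ⊢
  rw [Measure.integral_compProd hint]
  simp only [integral_ShatK hρ hρ' S hK]
  exact integral_sum_born_sq μ hρ S

open scoped ComplexOrder in
lemma CE_eq_one_sub_integral (μ : Measure (Matrix.unitaryGroup (Fin 2) ℂ))
    [μ.IsHaarMeasure] [IsProbabilityMeasure μ] {ρ : QMat n} (hρ : ρ.PosSemidef)
    (hρ' : ρ.trace = 1) (S : Finset (Fin n)) {K : ℕ} (hK : 2 ≤ K) :
    CE ρ S = 1 - (3 / 2) ^ S.card * ∫ p, ShatK K p.2 ∂(jointRound μ ρ S K) := by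
  rw [integral_ShatK_jointRound μ hρ hρ' S hK, CE, ← mul_assoc, ← mul_pow]
  norm_num

end Experiment

section Hoeffding

/-- Two-sided Hoeffding bound for the sum of `L` independent copies of a `[0, 1]`-valued
random variable on a product space. -/
lemma measure_abs_sum_sub_ge_le {Ω : Type*} [MeasurableSpace Ω] (ν : Measure Ω)
    [IsProbabilityMeasure ν] {X : Ω → ℝ} (hX : Measurable X) (h01 : ∀ ω, X ω ∈ Set.Icc (0 : ℝ) 1)
    (L : ℕ) {t : ℝ} (ht : 0 ≤ t) :
    (Measure.pi fun _ : Fin L => ν).real {ω | t ≤ |∑ l, (X (ω l) - ∫ x, X x ∂ν)|} ≤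
      2 * Real.exp (-(2 * t ^ 2) / L) := by
  set P := Measure.pi fun _ : Fin L => ν with hP
  set m := ∫ x, X x ∂ν with hm
  have hsub : ProbabilityTheory.HasSubgaussianMGF (fun x => X x - m) ((‖(1 : ℝ) - 0‖₊ / 2) ^ 2) ν :=
    ProbabilityTheory.hasSubgaussianMGF_of_mem_Icc hX.aemeasurable (ae_of_all _ h01)
  have hindep : ProbabilityTheory.iIndepFun (fun (l : Fin L) ω => X (ω l) - m) P :=
    ProbabilityTheory.iIndepFun_pi (X := fun _ x => X x - m) fun _ =>
      (hX.sub_const m).aemeasurable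
  have hcoord : ∀ l : Fin L, ProbabilityTheory.HasSubgaussianMGF (fun ω : Fin L → Ω => X (ω l) - m)
      ((‖(1 : ℝ) - 0‖₊ / 2) ^ 2) P := by
    intro l
    have hmp := measurePreserving_eval (fun _ : Fin L => ν) l
    refine ProbabilityTheory.HasSubgaussianMGF.of_map (X := fun x => X x - m)
      hmp.measurable.aemeasurable ?_
    rw [hmp.map_eq]
    exact hsub
  have hsum := ProbabilityTheory.HasSubgaussianMGF.sum_of_iIndepFun hindep
    (s := Finset.univ) fun l _ => hcoord l
  have h₁ := hsum.measure_ge_le ht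
  have h₂ := hsum.neg.measure_ge_le ht
  have hexp : -t ^ 2 / (2 * ((∑ _l : Fin L, (‖(1 : ℝ) - 0‖₊ / 2) ^ 2 : NNReal) : ℝ)) =
      -(2 * t ^ 2) / L := by
    simp
    rcases eq_or_ne (L : ℝ) 0 with h | h
    · simp [h]
    · field_simp
  rw [hexp] at h₁ h₂
  calc P.real {ω | t ≤ |∑ l, (X (ω l) - m)|}
      ≤ P.real ({ω | t ≤ ∑ l, (X (ω l) - m)} ∪ {ω | t ≤ -∑ l, (X (ω l) - m)}) := by
        refine measureReal_mono fun ω hω => ?_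
        exact le_abs.1 (Set.mem_ofPred_eq ▸ hω)
    _ ≤ _ := measureReal_union_le _ _
    _ ≤ _ := by
      rw [two_mul]
      exact add_le_add h₁ h₂

end Hoeffding

/-- **Unbiased CE estimation via LRM data, with a Hoeffding sample-complexity guarantee**:
the estimator `Ĉ = 1 - (3/2)^s (1/L) ∑_l Ŝ_l^{(K)}` is unbiased for `C_ψ(S)`, and for any
`ε > 0`, `δ ∈ (0,1)`, taking `L ≥ ⌈(9/4)^s log(2/δ)/(2ε²)⌉` random unitaries guarantees
`P(|Ĉ - C_ψ(S)| ≥ ε) ≤ δ`. -/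
theorem LRM_mean_estimator (n : ℕ) (ψ : (Fin n → Fin 2) → ℂ)
    (hψ : (∑ x, star (ψ x) * ψ x) = 1)
    (S : Finset (Fin n)) (hS : S.Nonempty) (K L : ℕ) (hK : 2 ≤ K) (hL : 1 ≤ L)
    (μ : Measure (Matrix.unitaryGroup (Fin 2) ℂ)) [μ.IsHaarMeasure] [IsProbabilityMeasure μ] :
    (∫ ω : Fin L → (({i : Fin n // i ∈ S} → Matrix.unitaryGroup (Fin 2) ℂ) ×
          (Fin K → ({i : Fin n // i ∈ S} → Fin 2))),
        (1 - (3 / 2 : ℝ) ^ S.card * ((1 / (L : ℝ)) * ∑ l : Fin L, ShatK K ((ω l).2)))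
        ∂(Measure.pi fun _ : Fin L => jointRound μ (Matrix.vecMulVec ψ (star ψ)) S K))
      = CE (Matrix.vecMulVec ψ (star ψ)) S ∧
    ∀ ε : ℝ, 0 < ε → ∀ δ : ℝ, 0 < δ → δ < 1 →
      ⌈(9 / 4 : ℝ) ^ S.card * Real.log (2 / δ) / (2 * ε ^ 2)⌉₊ ≤ L →
      (Measure.pi fun _ : Fin L => jointRound μ (Matrix.vecMulVec ψ (star ψ)) S K)
        {ω | ε ≤ |(1 - (3 / 2 : ℝ) ^ S.card * ((1 / (L : ℝ)) * ∑ l : Fin L, ShatK K ((ω l).2)))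
          - CE (Matrix.vecMulVec ψ (star ψ)) S|}
        ≤ ENNReal.ofReal δ := by
  open scoped ComplexOrder in
  have hρ : (Matrix.vecMulVec ψ (star ψ)).PosSemidef := Matrix.posSemidef_vecMulVec_self_star ψ
  have hρ' : (Matrix.vecMulVec ψ (star ψ)).trace = 1 := by
    rw [Matrix.trace_vecMulVec, dotProduct_comm]
    exact hψ
  have := isProbabilityMeasure_jointRound μ hρ hρ' S K
  set ρ := Matrix.vecMulVec ψ (star ψ)
  set ν := jointRound μ ρ S K with hν
  have hCE : CE ρ S = 1 - (3 / 2) ^ S.card * ∫ p, ShatK K p.2 ∂ν :=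
    CE_eq_one_sub_integral μ hρ hρ' S hK
  have hL₀ : (0 : ℝ) < L := by exact_mod_cast hL
  have hmeas := measurable_ShatK_snd S K
  refine ⟨?_, fun ε hε δ hδ hδ1 hLε => ?_⟩
  · have hint : Integrable (fun p => ShatK K p.2) ν :=
      Integrable.of_mem_Icc 0 1 hmeas.aemeasurable (ae_of_all _ fun p => ShatK_mem_Icc hK p.2)
    have hcoord : ∀ l : Fin L, Integrable
        (fun ω : Fin L → (({i : Fin n // i ∈ S} → Matrix.unitaryGroup (Fin 2) ℂ) ×
          (Fin K → ({i : Fin n // i ∈ S} → Fin 2))) => ShatK K (ω l).2)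
        (Measure.pi fun _ : Fin L => ν) := fun l =>
      integrable_comp_eval (μ := fun _ : Fin L => ν) (i := l) (f := fun p => ShatK K p.2) hint
    have hval : ∀ l : Fin L, ∫ ω, ShatK K (ω l).2 ∂(Measure.pi fun _ : Fin L => ν) =
        ∫ p, ShatK K p.2 ∂ν := fun l =>
      integral_comp_eval (μ := fun _ : Fin L => ν) (i := l) hint.aestronglyMeasurable
    rw [integral_sub (integrable_const _)
      (((integrable_finsetSum _ fun l _ => hcoord l).const_mul _).const_mul _),
      integral_const_mul, integral_const_mul, integral_finsetSum _ fun l _ => hcoord l, hCE]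
    simp only [hval, Finset.sum_const, Finset.card_univ, Fintype.card_fin, nsmul_eq_mul,
      integral_const, probReal_univ, one_smul]
    field_simp
  · have hc : (0 : ℝ) < (3 / 2) ^ S.card := by positivity
    have ht : 0 ≤ L * ε / (3 / 2 : ℝ) ^ S.card := by positivity
    have hset : {ω : Fin L → (({i : Fin n // i ∈ S} → Matrix.unitaryGroup (Fin 2) ℂ) ×
          (Fin K → ({i : Fin n // i ∈ S} → Fin 2))) |
        ε ≤ |(1 - (3 / 2 : ℝ) ^ S.card * ((1 / (L : ℝ)) * ∑ l : Fin L, ShatK K ((ω l).2)))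
          - CE ρ S|} =
        {ω | L * ε / (3 / 2 : ℝ) ^ S.card ≤
          |∑ l, (ShatK K (ω l).2 - ∫ p, ShatK K p.2 ∂ν)|} := by
      ext ω
      simp only [Set.mem_ofPred_eq, Finset.sum_sub_distrib, Finset.sum_const, Finset.card_univ,
        Fintype.card_fin, nsmul_eq_mul]
      have : 1 - (3 / 2 : ℝ) ^ S.card * ((1 / (L : ℝ)) * ∑ l : Fin L, ShatK K ((ω l).2)) - CE ρ S =
          -((3 / 2 : ℝ) ^ S.card / L *
            (∑ l : Fin L, ShatK K ((ω l).2) - L * ∫ p, ShatK K p.2 ∂ν)) := by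
        rw [hCE]
        field_simp
        ring
      rw [this, abs_neg, abs_mul, abs_of_pos (div_pos hc hL₀), div_mul_eq_mul_div, le_div_iff₀ hL₀,
        div_le_iff₀' hc, mul_comm ε]
    have hbound := measure_abs_sum_sub_ge_le ν hmeas (fun p => ShatK_mem_Icc hK p.2) L ht
    rw [hset, ← ofReal_measureReal]
    refine ENNReal.ofReal_le_ofReal (hbound.trans ?_)
    have hsq : ((3 / 2 : ℝ) ^ S.card) ^ 2 = (9 / 4) ^ S.card := by
      rw [← pow_mul, mul_comm, pow_mul]
      norm_num
    have hlog : Real.log (2 / δ) ≤ 2 * (L * ε / (3 / 2 : ℝ) ^ S.card) ^ 2 / L := by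
      have h := Nat.ceil_le.1 hLε
      rw [div_le_iff₀ (by positivity)] at h
      rw [div_pow, mul_pow, hsq, le_div_iff₀ hL₀, mul_div_assoc', le_div_iff₀ (by positivity)]
      nlinarith [mul_le_mul_of_nonneg_left h hL₀.le]
    calc 2 * Real.exp (-(2 * (L * ε / (3 / 2 : ℝ) ^ S.card) ^ 2) / L)
        ≤ 2 * Real.exp (-Real.log (2 / δ)) := by
          rw [neg_div]
          gcongr
      _ = δ := by
          rw [Real.exp_neg, Real.exp_log (by positivity)]
          field_simp
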